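/- Let λ : ℕ → ℝ (indexed by i ≥ 1) be a nonincreasing sequence of strictly positive reals for which there is a constant 0 < c ≤ 1 with λ(2^{j+1}) ≥ c · λ(2^{j}) for all j ∈ ℕ. Let r, s > 0 and p : ℕ → ℝ be such that the family i ↦ (λ i)^(−(r+s)) · (p i)² is summable. Then for every n ∈ ℕ, ∑'_{i ≥ 2^n} (λ i)^(-r) · (p i)² ≤ c^(−(r+s)) · (λ(2^n))^s · ∑'_{i ≥ 1} (λ i)^(−(r+s)) · (p i)². (Theorem 3.4, second part: the dyadic-block bound |P − P_{2^n}|²_{𝔸^{r,2}_λ} ≤ const · λ_{2^n}^s · |P|²_{𝔸^{r+s,2}_λ} for quasigeometric eigenvalue sequences.) -/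

import Mathlib

/-! Since `l` is antitone, every `i ≥ 2 ^ n` satisfies
`l i ^ (-r) = l i ^ s * l i ^ (-(r + s)) ≤ l (2 ^ n) ^ s * l i ^ (-(r + s))`. Summing this termwise
comparison over the tail and enlarging the range of summation to `i ≥ 1` gives the bound with
constant `1`, and `1 ≤ c ^ (-(r + s))` because `0 < c ≤ 1`. -/

/-- The tail bound with constant `1`, valid for truncation at any index `N ≥ 1`. -/
theorem tail_le_rpow_mul_tsum
    (l : ℕ → ℝ) (hl : ∀ i, 0 < l i) (hanti : Antitone l)
    (r s : ℝ) (hs : 0 < s) (p : ℕ → ℝ)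
    (hsum : Summable fun i : {i : ℕ // 1 ≤ i} => (l i.1) ^ (-(r + s)) * (p i.1) ^ 2)
    (N : ℕ) (hN : 1 ≤ N) :
    ∑' i : {i : ℕ // N ≤ i}, (l i.1) ^ (-r) * (p i.1) ^ 2 ≤
      (l N) ^ s * ∑' i : {i : ℕ // 1 ≤ i}, (l i.1) ^ (-(r + s)) * (p i.1) ^ 2 := by
  have hnn : ∀ i, 0 ≤ l i ^ (-(r + s)) * p i ^ 2 := fun i =>
    mul_nonneg (Real.rpow_nonneg (hl i).le _) (sq_nonneg (p i))
  have hls : 0 ≤ l N ^ s := Real.rpow_nonneg (hl _).le _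
  have hterm : ∀ i, N ≤ i →
      l i ^ (-r) * p i ^ 2 ≤ l N ^ s * (l i ^ (-(r + s)) * p i ^ 2) := by
    intro i hi
    have hsplit : l i ^ (-r) = l i ^ s * l i ^ (-(r + s)) := by
      rw [← Real.rpow_add (hl i)]
      congr 1
      ring
    rw [hsplit, mul_assoc]
    exact mul_le_mul_of_nonneg_right
      (Real.rpow_le_rpow (hl i).le (hanti hi) hs.le) (hnn i)
  obtain ⟨e, he_val⟩ : ∃ e : {i : ℕ // N ≤ i} → {i : ℕ // 1 ≤ i}, ∀ i, (e i).1 = i.1 :=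
    ⟨fun i => ⟨i.1, hN.trans i.2⟩, fun _ => rfl⟩
  have he : Function.Injective e := by
    intro a b h
    exact Subtype.ext (by rw [← he_val a, ← he_val b, h])
  have hdom : ∀ i : {i : ℕ // N ≤ i}, l i.1 ^ (-r) * p i.1 ^ 2 ≤
      l N ^ s * (l (e i).1 ^ (-(r + s)) * p (e i).1 ^ 2) := by
    intro i
    rw [he_val]
    exact hterm i.1 i.2
  have hmaj := hsum.mul_left (l N ^ s)
  -- Without summability the tail `tsum` would be the junk value `0`; it is a genuine sum here.
  have htail : Summable fun i : {i : ℕ // N ≤ i} => l i.1 ^ (-r) * p i.1 ^ 2 :=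
    Summable.of_nonneg_of_le
      (fun i => mul_nonneg (Real.rpow_nonneg (hl i.1).le _) (sq_nonneg (p i.1)))
      hdom (hmaj.comp_injective he)
  calc ∑' i : {i : ℕ // N ≤ i}, l i.1 ^ (-r) * p i.1 ^ 2
      ≤ ∑' i : {i : ℕ // 1 ≤ i}, l N ^ s * (l i.1 ^ (-(r + s)) * p i.1 ^ 2) :=
        Summable.tsum_le_tsum_of_inj e he (fun i _ => mul_nonneg hls (hnn i.1))
          hdom htail hmaj
    _ = l N ^ s * ∑' i : {i : ℕ // 1 ≤ i}, l i.1 ^ (-(r + s)) * p i.1 ^ 2 := tsum_mul_left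

/-- Theorem 3.4, second part: the dyadic-block bound
`|P − P_{2^n}|²_{𝔸^{r,2}_λ} ≤ c^{-(r+s)} λ_{2^n}^s |P|²_{𝔸^{r+s,2}_λ}`
for quasigeometric eigenvalue sequences. -/
theorem diagonal_operator_dyadic_tail_bound
    (l : ℕ → ℝ) (hl : ∀ i, 0 < l i) (hanti : Antitone l)
    (c : ℝ) (hc0 : 0 < c) (hc1 : c ≤ 1)
    (hquasi : ∀ j : ℕ, c * l (2 ^ j) ≤ l (2 ^ (j + 1)))
    (r s : ℝ) (hr : 0 < r) (hs : 0 < s) (p : ℕ → ℝ)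
    (hsum : Summable fun i : {i : ℕ // 1 ≤ i} => (l i.1) ^ (-(r + s)) * (p i.1) ^ 2) :
    ∀ n : ℕ,
      ∑' i : {i : ℕ // 2 ^ n ≤ i}, (l i.1) ^ (-r) * (p i.1) ^ 2 ≤
        c ^ (-(r + s)) * (l (2 ^ n)) ^ s *
          ∑' i : {i : ℕ // 1 ≤ i}, (l i.1) ^ (-(r + s)) * (p i.1) ^ 2 := by
  intro n
  have hc : 1 ≤ c ^ (-(r + s)) :=
    Real.one_le_rpow_of_pos_of_le_one_of_nonpos hc0 hc1 (by linarith)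
  refine (tail_le_rpow_mul_tsum l hl hanti r s hs p hsum (2 ^ n) Nat.one_le_two_pow).trans ?_
  refine mul_le_mul_of_nonneg_right
    (le_mul_of_one_le_left (Real.rpow_nonneg (hl _).le _) hc) (tsum_nonneg fun i => ?_)
  exact mul_nonneg (Real.rpow_nonneg (hl i.1).le _) (sq_nonneg (p i.1))
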